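/- arXiv:1611.02249 — 2 statements merged into one kernel-verified Lean document; each statement's English description precedes it below -/
import Mathlib

section
/- Let M_UPL be the submonoid of binary relations on the 28-element set H of major, minor, and augmented triads generated by the parsimonious relations U, P, L. There exists a monoid automorphism N of M_UPL with N(L) = L, N(P) = P, and N(U) = P·U·P, and this automorphism is nontrivial, i.e. P·U·P ≠ U. -/
/-- The 28-element set of the 24 major and minor triads and the 4 augmented triads:
`Sum.inl n` is the major triad `n_M`, `Sum.inr (Sum.inl n)` is the minor triad `n_m`,
and `Sum.inr (Sum.inr k)` is the augmented triad `k_aug`. -/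
abbrev Htriads : Type := (ZMod 12) ⊕ (ZMod 12) ⊕ (ZMod 4)

/-- Binary relations on `Htriads`. -/
abbrev MRel : Type := Htriads → Htriads → Prop

/-- The monoid of binary relations on `Htriads`: `r * s` relates `x` to `z` iff there is `y`
with `x r y` and `y s z` (i.e. first apply `r`, then `s`), and `1` is the equality relation. -/
instance : Monoid MRel where
  one := fun x y => x = y
  mul := fun r s => fun x z => ∃ y, r x y ∧ s y z
  mul_assoc r s t := by
    funext x z
    apply propext
    constructor
    · rintro ⟨y, ⟨w, hw1, hw2⟩, hy⟩
      exact ⟨w, hw1, y, hw2, hy⟩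
    · rintro ⟨w, hw1, y, hy1, hy2⟩
      exact ⟨y, ⟨w, hw1, hy1⟩, hy2⟩
  one_mul r := by
    funext x z
    apply propext
    constructor
    · rintro ⟨y, rfl, h⟩
      exact h
    · intro h
      exact ⟨x, rfl, h⟩
  mul_one r := by
    funext x z
    apply propext
    constructor
    · rintro ⟨y, h, rfl⟩
      exact h
    · intro h
      exact ⟨z, h, rfl⟩

/-- The major triad on root `n`. -/
def maj (n : ZMod 12) : Htriads := Sum.inl n
/-- The minor triad on root `n`. -/
def mino (n : ZMod 12) : Htriads := Sum.inr (Sum.inl n)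
/-- The augmented triad `k_aug`, `k ∈ ℤ/4`. -/
def aug (k : ZMod 4) : Htriads := Sum.inr (Sum.inr k)

/-- Reduction mod 4 of a pitch class mod 12. -/
def m4 (n : ZMod 12) : ZMod 4 := ZMod.castHom (show (4:ℕ) ∣ 12 by norm_num) (ZMod 4) n

/-- The relation `𝒰`: the symmetric relation relating exactly `n_M` with `(n mod 4)_aug`
and `n_m` with `((n+3) mod 4)_aug`. -/
def Urel : MRel := fun x y =>
  (∃ n : ZMod 12, x = maj n ∧ y = aug (m4 n)) ∨
  (∃ n : ZMod 12, x = aug (m4 n) ∧ y = maj n) ∨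
  (∃ n : ZMod 12, x = mino n ∧ y = aug (m4 (n + 3))) ∨
  (∃ n : ZMod 12, x = aug (m4 (n + 3)) ∧ y = mino n)

/-- The relation `𝒫`: the symmetric relation relating exactly `n_M` with `n_m`,
and each augmented triad with itself. -/
def Prel : MRel := fun x y =>
  (∃ n : ZMod 12, x = maj n ∧ y = mino n) ∨
  (∃ n : ZMod 12, x = mino n ∧ y = maj n) ∨
  (∃ k : ZMod 4, x = aug k ∧ y = aug k)

/-- The relation `ℒ`: the symmetric relation relating exactly `n_M` with `(n+4)_m`,
and each augmented triad with itself. -/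
def Lrel : MRel := fun x y =>
  (∃ n : ZMod 12, x = maj n ∧ y = mino (n + 4)) ∨
  (∃ n : ZMod 12, x = mino (n + 4) ∧ y = maj n) ∨
  (∃ k : ZMod 4, x = aug k ∧ y = aug k)

/-- Douthett's parsimonious relation `𝒮 = P_{1,0}` on major, minor and augmented triads. -/
def Srel : MRel := fun x y =>
  (∃ n : ZMod 12, x = maj n ∧ y = mino n) ∨
  (∃ n : ZMod 12, x = mino n ∧ y = maj n) ∨
  (∃ n : ZMod 12, x = maj n ∧ y = mino (n + 4)) ∨
  (∃ n : ZMod 12, x = mino (n + 4) ∧ y = maj n) ∨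
  (∃ n : ZMod 12, x = maj n ∧ y = aug (m4 n)) ∨
  (∃ n : ZMod 12, x = aug (m4 n) ∧ y = maj n) ∨
  (∃ n : ZMod 12, x = mino n ∧ y = aug (m4 (n + 3))) ∨
  (∃ n : ZMod 12, x = aug (m4 (n + 3)) ∧ y = mino n)

/-- Douthett's parsimonious relation `𝒯 = P_{2,0}` on major, minor and augmented triads. -/
def Trel : MRel := fun x y =>
  (∃ n : ZMod 12, x = maj n ∧ y = maj (n + 4)) ∨
  (∃ n : ZMod 12, x = maj n ∧ y = maj (n + 8)) ∨
  (∃ n : ZMod 12, x = maj n ∧ y = mino (n + 1)) ∨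
  (∃ n : ZMod 12, x = mino (n + 1) ∧ y = maj n) ∨
  (∃ n : ZMod 12, x = maj n ∧ y = mino (n + 5)) ∨
  (∃ n : ZMod 12, x = mino (n + 5) ∧ y = maj n) ∨
  (∃ n : ZMod 12, x = maj n ∧ y = aug (m4 (n + 3))) ∨
  (∃ n : ZMod 12, x = aug (m4 (n + 3)) ∧ y = maj n) ∨
  (∃ n : ZMod 12, x = mino n ∧ y = mino (n + 4)) ∨
  (∃ n : ZMod 12, x = mino n ∧ y = mino (n + 8)) ∨
  (∃ n : ZMod 12, x = mino n ∧ y = aug (m4 n)) ∨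
  (∃ n : ZMod 12, x = aug (m4 n) ∧ y = mino n)

/-- The submonoid `M_UPL` of relations on `Htriads` generated by `{U, P, L}`. -/
def MUPL : Submonoid MRel := Submonoid.closure {Urel, Prel, Lrel}

lemma Urel_mem : Urel ∈ MUPL := Submonoid.subset_closure (Set.mem_insert _ _)
lemma Prel_mem : Prel ∈ MUPL :=
  Submonoid.subset_closure (Set.mem_insert_of_mem _ (Set.mem_insert _ _))
lemma Lrel_mem : Lrel ∈ MUPL :=
  Submonoid.subset_closure (Set.mem_insert_of_mem _ (Set.mem_insert_of_mem _ rfl))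

/-!
Any permutation of the triads acts on the monoid of relations by conjugation. Take the permutation
that multiplies the roots of major and minor triads by `7` and sends `k_aug` to `(3 - k)_aug`. It
commutes with `P`, and with `L` because `7 * 4 = 4` in `ℤ/12`. As `7 = -1` in `ℤ/4`, it carries `U`
to the relation between `n_M` and `(n + 3)_aug` and between `n_m` and `n_aug`, which is `P * U * P`.
Since `P * P = 1`, the relations `P * U * P`, `P`, `L` generate the same submonoid as `U`, `P`, `L`,
so this conjugation restricts to an automorphism of `M_UPL`.
-/

lemma closure_insert_conj_of_mul_self_eq_one {M : Type*} [Monoid M] {p : M} (u : M) {s : Set M}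
    (hp : p * p = 1) (hps : p ∈ Submonoid.closure s) :
    Submonoid.closure (insert (p * u * p) s) = Submonoid.closure (insert u s) := by
  have conj_mem (a b : M) (hb : b = p * a * p) :
      Submonoid.closure (insert b s) ≤ Submonoid.closure (insert a s) := by
    have mem_closure {x : M} (hx : x ∈ insert a s) : x ∈ Submonoid.closure (insert a s) :=
      Submonoid.subset_closure hx
    have p_mem := Submonoid.closure_mono (Set.subset_insert a s) hps
    rw [Submonoid.closure_le, Set.insert_subset_iff, hb]
    exact ⟨mul_mem (mul_mem p_mem (mem_closure (Set.mem_insert a s))) p_mem,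
      fun x hx => mem_closure (Set.mem_insert_of_mem a hx)⟩
  have conj_conj : u = p * (p * u * p) * p := by
    rw [mul_assoc p u p, ← mul_assoc p p, hp, one_mul, mul_assoc, hp, mul_one]
  exact le_antisymm (conj_mem u _ rfl) (conj_mem _ u conj_conj)

/-- The graph of a self-map of the triads, as an element of the monoid of relations. As `r * s`
applies `r` first, `graphRel f * graphRel g` is the graph of `g ∘ f`. -/
def graphRel (f : Htriads → Htriads) : MRel := fun x y => f x = y

/-- Conjugation of relations by a permutation `σ` of the triads. The direction is chosen such that
`conjRel σ r` relates `x` to `y` iff `r` relates `σ x` to `σ y`. -/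
def conjRel (σ : Equiv.Perm Htriads) : MulAut MRel where
  toFun r := fun x y => r (σ x) (σ y)
  invFun r := fun x y => r (σ.symm x) (σ.symm y)
  left_inv r := by simp only [Equiv.apply_symm_apply]
  right_inv r := by simp only [Equiv.symm_apply_apply]
  map_mul' r s := by
    funext x z
    exact propext (σ.surjective.exists (p := fun y => r (σ x) y ∧ s y (σ z)))

lemma conjRel_apply (σ : Equiv.Perm Htriads) (r : MRel) (x y : Htriads) :
    conjRel σ r x y ↔ r (σ x) (σ y) := Iff.rfl

lemma conjRel_graphRel {σ : Equiv.Perm Htriads} {f : Htriads → Htriads}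
    (h : Function.Commute f σ) : conjRel σ (graphRel f) = graphRel f := by
  ext x y
  rw [conjRel_apply, graphRel, h.eq, σ.injective.eq_iff, graphRel]

lemma graphRel_mul_mul_graphRel_symm (σ : Equiv.Perm Htriads) (r : MRel) :
    graphRel σ * r * graphRel σ.symm = conjRel σ r := by
  ext x z
  constructor
  · rintro ⟨_, ⟨_, rfl, hr⟩, rfl⟩
    rwa [conjRel_apply, Equiv.apply_symm_apply]
  · intro hr
    exact ⟨σ z, ⟨σ x, rfl, hr⟩, σ.symm_apply_apply z⟩

lemma graphRel_mul_graphRel_symm (σ : Equiv.Perm Htriads) :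
    graphRel σ * graphRel σ.symm = 1 := by
  simpa only [mul_one, map_one] using graphRel_mul_mul_graphRel_symm σ 1

/-- The self-map of the triads whose graph is `P`. -/
def parallel : Htriads → Htriads
  | Sum.inl n => mino n
  | Sum.inr (Sum.inl n) => maj n
  | Sum.inr (Sum.inr k) => aug k

/-- The self-map of the triads whose graph is `L`. -/
def leadingTone : Htriads → Htriads
  | Sum.inl n => mino (n + 4)
  | Sum.inr (Sum.inl n) => maj (n - 4)
  | Sum.inr (Sum.inr k) => aug k

/-- The permutation of the triads by which conjugation realizes the automorphism: multiplication of
the roots of major and minor triads by the unit `7` of `ℤ/12`, and `k_aug ↦ (3 - k)_aug`. -/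
def mulSeven : Equiv.Perm Htriads :=
  let seven : (ZMod 12)ˣ := ⟨7, 7, rfl, rfl⟩
  Equiv.sumCongr seven.mulLeft (Equiv.sumCongr seven.mulLeft (Equiv.subLeft 3))

lemma parallel_involutive : Function.Involutive parallel := by
  rintro (n | n | k) <;> rfl

lemma Prel_eq_graphRel : Prel = graphRel parallel := by
  ext x y
  rcases x with n | n | k <;> rcases y with m | m | l <;>
    simp [Prel, graphRel, parallel, maj, mino, aug, eq_comm]

lemma Lrel_eq_graphRel : Lrel = graphRel leadingTone := by
  ext x y
  rcases x with n | n | k <;> rcases y with m | m | l <;>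
    simp [Lrel, graphRel, leadingTone, maj, mino, aug, eq_comm, eq_sub_iff_add_eq]

lemma Prel_mul_mul_Prel (r : MRel) :
    Prel * r * Prel = conjRel parallel_involutive.toPerm r := by
  rw [Prel_eq_graphRel]
  exact graphRel_mul_mul_graphRel_symm parallel_involutive.toPerm r

lemma Prel_mul_Prel : Prel * Prel = 1 := by
  rw [Prel_eq_graphRel]
  exact graphRel_mul_graphRel_symm parallel_involutive.toPerm

lemma parallel_commute_mulSeven : Function.Commute parallel mulSeven := by
  rintro (n | n | k) <;> rfl

lemma leadingTone_commute_mulSeven : Function.Commute leadingTone mulSeven := by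
  have seven_mul_four : (7 * 4 : ZMod 12) = 4 := rfl
  rintro (n | n | k)
  · change mino (7 * n + 4) = mino (7 * (n + 4))
    rw [mul_add, seven_mul_four]
  · change maj (7 * n - 4) = maj (7 * (n - 4))
    rw [mul_sub, seven_mul_four]
  · rfl

lemma m4_add_three (n : ZMod 12) : m4 (n + 3) = m4 n + 3 := map_add _ n 3

lemma m4_seven_mul (n : ZMod 12) : m4 (7 * n) = -m4 n := by
  have seven_eq : m4 7 = -1 := rfl
  rw [← neg_one_mul, ← seven_eq]
  exact map_mul _ 7 n

lemma conjRel_mulSeven_Prel : conjRel mulSeven Prel = Prel := by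
  rw [Prel_eq_graphRel, conjRel_graphRel parallel_commute_mulSeven]

lemma conjRel_mulSeven_Lrel : conjRel mulSeven Lrel = Lrel := by
  rw [Lrel_eq_graphRel, conjRel_graphRel leadingTone_commute_mulSeven]

lemma Urel_maj_aug {n : ZMod 12} {k : ZMod 4} : Urel (maj n) (aug k) ↔ k = m4 n := by
  simp [Urel, maj, mino, aug]

lemma Urel_mino_aug {n : ZMod 12} {k : ZMod 4} : Urel (mino n) (aug k) ↔ k = m4 n + 3 := by
  simp [Urel, maj, mino, aug, m4_add_three]

lemma conjRel_mulSeven_Urel : conjRel mulSeven Urel = Prel * Urel * Prel := by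
  rw [Prel_mul_mul_Prel]
  ext x y
  have three_sub_eq_neg (k m : ZMod 4) : 3 - k = -m ↔ k = m + 3 := by
    rw [sub_eq_iff_eq_add, eq_neg_add_iff_add_eq, eq_comm]
  have three_sub_eq_neg_add_three (k m : ZMod 4) : 3 - k = -m + 3 ↔ k = m := by
    rw [sub_eq_neg_add, add_left_inj, neg_inj]
  rcases x with n | n | k <;> rcases y with m | m | l <;>
    simp [conjRel_apply, Urel, mulSeven, parallel, maj, mino, aug, m4_add_three, m4_seven_mul,
      three_sub_eq_neg, three_sub_eq_neg_add_three]

lemma Prel_mul_Urel_mul_Prel_ne_Urel : Prel * Urel * Prel ≠ Urel := by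
  intro h
  have maj_aug : Urel (maj 0) (aug 0) := Urel_maj_aug.2 rfl
  rw [← h, Prel_mul_mul_Prel] at maj_aug
  have mino_aug : Urel (mino 0) (aug 0) := maj_aug
  have zero_eq_three : (0 : ZMod 4) = m4 0 + 3 := Urel_mino_aug.1 mino_aug
  exact absurd zero_eq_three (by decide)

lemma map_conjRel_mulSeven_MUPL : MUPL.map (conjRel mulSeven : MRel →* MRel) = MUPL := by
  rw [MUPL, MonoidHom.map_mclosure, Set.image_insert_eq, Set.image_pair]
  simp only [MonoidHom.coe_coe, conjRel_mulSeven_Urel, conjRel_mulSeven_Prel,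
    conjRel_mulSeven_Lrel]
  exact closure_insert_conj_of_mul_self_eq_one Urel Prel_mul_Prel
    (Submonoid.subset_closure (Set.mem_insert _ _))

/-- there exists a monoid automorphism `N` of `M_UPL` with `N(L) = L`,
`N(P) = P` and `N(U) = P·U·P`, and it is nontrivial, i.e. `P·U·P ≠ U`. -/
theorem stmt10 :
    (∃ N : MulAut MUPL,
      N ⟨Lrel, Lrel_mem⟩ = ⟨Lrel, Lrel_mem⟩ ∧
      N ⟨Prel, Prel_mem⟩ = ⟨Prel, Prel_mem⟩ ∧
      (N ⟨Urel, Urel_mem⟩ : MRel) = Prel * Urel * Prel) ∧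
    Prel * Urel * Prel ≠ Urel := by
  let N : MulAut MUPL := ((conjRel mulSeven).submonoidMap MUPL).trans
    (MulEquiv.submonoidCongr map_conjRel_mulSeven_MUPL)
  exact ⟨⟨N, Subtype.ext conjRel_mulSeven_Lrel, Subtype.ext conjRel_mulSeven_Prel,
    conjRel_mulSeven_Urel⟩, Prel_mul_Urel_mul_Prel_ne_Urel⟩
end

section
/- Let S be Douthett's parsimonious relation P_{1,0} on the 28-element set H of major, minor, and augmented triads. In the monoid of binary relations on H under relational composition, S⁷ = S⁵. -/
/-
The sum of the pitch classes of a triad, an element of `ZMod 12`, changes by `±1` along `Srel`, so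
the graph of `Srel` is bipartite, and `Srel ^ n` only relates triads whose sums differ by `n`
modulo 2. From five steps on this parity condition is also sufficient. Indeed every triad has a
neighbour whose sum is one higher and one whose sum is one lower, each sum divisible by 3 belongs to
a single (augmented) triad, and any three consecutive sums contain such a bottleneck; hence triads
whose sums differ by `n ≥ 2` are joined by a monotone path of length `n` through a bottleneck. Two
triads with sums of different parity can each be moved one step so that the sums differ by exactly
3, which makes five steps in all.
-/

/-- The sum of the three pitch classes of a triad: `n, n + 4, n + 7` in `n_M`, `n, n + 3, n + 7` in
`n_m` and `k, k + 4, k + 8` in `k_aug`. It orders the triads cyclically by voice leading. Changing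
the lift of `k` to `ZMod 12` only permutes the three pitch classes of `k_aug`. -/
def pcSum : Htriads → ZMod 12
  | .inl n => n + (n + 4) + (n + 7)
  | .inr (.inl n) => n + (n + 3) + (n + 7)
  | .inr (.inr k) => k.cast + (k.cast + 4) + (k.cast + 8)

/-- The parity of a residue mod 12. Composed with `pcSum` it is the two-colouring that shows the
graph of `Srel` to be bipartite. -/
def parity : ZMod 12 →+* ZMod 2 := ZMod.castHom (show 2 ∣ 12 by norm_num) (ZMod 2)

namespace MRel

variable {r : MRel} {m n : ℕ} {x y z : Htriads}

lemma pow_add_apply (hxy : (r ^ m) x y) (hyz : (r ^ n) y z) : (r ^ (m + n)) x z := by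
  rw [pow_add]
  exact ⟨y, hxy, hyz⟩

lemma pow_one_apply (h : r x y) : (r ^ 1) x y := by
  rwa [pow_one]

instance symm_pow [Std.Symm r] : Std.Symm (r ^ n) where
  symm x y h := by
    induction n generalizing x with
    | zero => exact Eq.symm h
    | succ n ih =>
      rw [pow_succ'] at h
      obtain ⟨w, hxw, hwy⟩ := h
      exact pow_add_apply (ih w hwy) (pow_one_apply (symm_of r hxw))

end MRel

lemma m4_surjective : Function.Surjective m4 := ZMod.castHom_surjective _

lemma pcSum_maj (n : ZMod 12) : pcSum (maj n) = 3 * n - 1 := by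
  revert n; decide

lemma pcSum_mino (n : ZMod 12) : pcSum (mino n) = 3 * n - 2 := by
  revert n; decide

lemma pcSum_aug_m4 (n : ZMod 12) : pcSum (aug (m4 n)) = 3 * n := by
  revert n; decide

lemma eq_aug_of_pcSum_eq {x : Htriads} {k : ZMod 4} (h : pcSum x = pcSum (aug k)) : x = aug k := by
  revert x k; decide

lemma exists_pcSum_aug_eq_add (a : ZMod 12) : ∃ j ≤ 2, ∃ k, pcSum (aug k) = a + (j : ℕ) := by
  revert a; decide

lemma srel_mino_maj (n : ZMod 12) : Srel (mino n) (maj n) :=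
  .inr (.inl ⟨n, rfl, rfl⟩)

lemma srel_maj_aug (n : ZMod 12) : Srel (maj n) (aug (m4 n)) :=
  .inr (.inr (.inr (.inr (.inl ⟨n, rfl, rfl⟩))))

lemma srel_aug_mino (n : ZMod 12) : Srel (aug (m4 (n + 3))) (mino n) :=
  .inr (.inr (.inr (.inr (.inr (.inr (.inr ⟨n, rfl, rfl⟩))))))

instance symm_srel : Std.Symm Srel where
  symm x y h := by
    unfold Srel at h ⊢
    grind

lemma pcSum_eq_of_srel {x y : Htriads} (h : Srel x y) :
    pcSum y = pcSum x + 1 ∨ pcSum x = pcSum y + 1 := by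
  rcases h with ⟨n, rfl, rfl⟩ | ⟨n, rfl, rfl⟩ | ⟨n, rfl, rfl⟩ | ⟨n, rfl, rfl⟩ |
    ⟨n, rfl, rfl⟩ | ⟨n, rfl, rfl⟩ | ⟨n, rfl, rfl⟩ | ⟨n, rfl, rfl⟩ <;>
  simp only [pcSum_maj, pcSum_mino, pcSum_aug_m4] <;> revert n <;> decide

lemma parity_eq_of_srel {x y : Htriads} (h : Srel x y) :
    parity (pcSum y) = parity (pcSum x) + 1 := by
  rcases pcSum_eq_of_srel h with hs | hs
  · rw [hs, map_add, map_one]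
  · rw [hs, map_add, map_one, add_assoc, CharTwo.add_self_eq_zero, add_zero]

lemma parity_eq_of_srel_pow {n : ℕ} {x y : Htriads} (h : (Srel ^ n) x y) :
    parity (pcSum y) = parity (pcSum x) + n := by
  induction n generalizing y with
  | zero => rw [show x = y from h, Nat.cast_zero, add_zero]
  | succ n ih =>
    rw [pow_succ] at h
    obtain ⟨w, hxw, hwy⟩ := h
    rw [parity_eq_of_srel hwy, ih hxw, Nat.cast_succ, add_assoc]

lemma exists_srel_pcSum_eq_add_one (x : Htriads) : ∃ y, Srel x y ∧ pcSum y = pcSum x + 1 := by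
  obtain n | n | k := x
  · refine ⟨_, srel_maj_aug n, ?_⟩
    rw [pcSum_aug_m4, ← maj, pcSum_maj, sub_add_cancel]
  · refine ⟨_, srel_mino_maj n, ?_⟩
    rw [pcSum_maj, ← mino, pcSum_mino]
    ring
  · obtain ⟨n, rfl⟩ := m4_surjective k
    obtain ⟨n, rfl⟩ := add_right_surjective 3 n
    refine ⟨_, srel_aug_mino n, ?_⟩
    rw [pcSum_mino, ← aug, pcSum_aug_m4]
    have twelve : (12 : ZMod 12) = 0 := rfl
    linear_combination -twelve

lemma exists_srel_pcSum_eq_sub_one (x : Htriads) : ∃ y, Srel x y ∧ pcSum y = pcSum x - 1 := by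
  obtain n | n | k := x
  · refine ⟨_, symm_of Srel (srel_mino_maj n), ?_⟩
    rw [pcSum_mino, ← maj, pcSum_maj]
    ring
  · refine ⟨_, symm_of Srel (srel_aug_mino n), ?_⟩
    rw [pcSum_aug_m4, ← mino, pcSum_mino]
    have twelve : (12 : ZMod 12) = 0 := rfl
    linear_combination twelve
  · obtain ⟨n, rfl⟩ := m4_surjective k
    refine ⟨_, symm_of Srel (srel_maj_aug n), ?_⟩
    rw [pcSum_maj, ← aug, pcSum_aug_m4]

lemma exists_srel_pow_pcSum_eq_add_mul {s : ZMod 12} (hs : s = 1 ∨ s = -1) (n : ℕ) (x : Htriads) :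
    ∃ y, (Srel ^ n) x y ∧ pcSum y = pcSum x + n * s := by
  induction n with
  | zero => exact ⟨x, rfl, by rw [Nat.cast_zero, zero_mul, add_zero]⟩
  | succ n ih =>
    obtain ⟨w, hxw, hw⟩ := ih
    obtain ⟨y, hwy, hy⟩ : ∃ y, Srel w y ∧ pcSum y = pcSum w + s := by
      obtain rfl | rfl := hs
      · exact exists_srel_pcSum_eq_add_one w
      · simpa only [sub_eq_add_neg] using exists_srel_pcSum_eq_sub_one w
    refine ⟨y, MRel.pow_add_apply hxw (MRel.pow_one_apply hwy), ?_⟩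
    rw [hy, hw]
    push_cast
    ring

lemma srel_pow_of_pcSum_eq_add {n : ℕ} (hn : 2 ≤ n) {x z : Htriads}
    (h : pcSum z = pcSum x + n) : (Srel ^ n) x z := by
  obtain ⟨j, hj, k, hk⟩ := exists_pcSum_aug_eq_add (pcSum x)
  obtain ⟨m, rfl⟩ := Nat.exists_eq_add_of_le (hj.trans hn)
  obtain ⟨y, hxy, hy⟩ := exists_srel_pow_pcSum_eq_add_mul (.inl rfl) j x
  obtain ⟨y', hzy', hy'⟩ := exists_srel_pow_pcSum_eq_add_mul (.inr rfl) m z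
  obtain rfl : y = aug k := eq_aug_of_pcSum_eq (by rw [hy, hk, mul_one])
  obtain rfl : y' = aug k := eq_aug_of_pcSum_eq (by rw [hy', hk, h]; push_cast; ring)
  exact MRel.pow_add_apply hxy (symm_of (Srel ^ m) hzy')

-- Since `d` is odd, `±d` is `1`, `3` or `5`, and moving both ends by one turns it into `±3`.
lemma exists_add_eq_add_three_of_odd {d : ZMod 12} (hd : parity d = 1) :
    ∃ s t : ZMod 12, (s = 1 ∨ s = -1) ∧ (t = 1 ∨ t = -1) ∧ (d + t = s + 3 ∨ s = d + t + 3) := by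
  revert d; decide

lemma srel_pow_five_of_parity_eq {x z : Htriads}
    (h : parity (pcSum z) = parity (pcSum x) + 1) : (Srel ^ 5) x z := by
  obtain ⟨s, t, hs, ht, hst⟩ := exists_add_eq_add_three_of_odd (d := pcSum z - pcSum x) <| by
    rw [map_sub, sub_eq_iff_eq_add', h]
  obtain ⟨x', hxx', hx'⟩ := exists_srel_pow_pcSum_eq_add_mul hs 1 x
  obtain ⟨z', hzz', hz'⟩ := exists_srel_pow_pcSum_eq_add_mul ht 1 z
  have hx'z' : (Srel ^ 3) x' z' := by
    rcases hst with hst | hst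
    · refine srel_pow_of_pcSum_eq_add (by norm_num) ?_
      rw [hx', hz']
      push_cast
      linear_combination hst
    · refine symm_of (Srel ^ 3) (srel_pow_of_pcSum_eq_add (by norm_num) ?_)
      rw [hx', hz']
      push_cast
      linear_combination hst
  exact MRel.pow_add_apply (MRel.pow_add_apply hxx' hx'z') (symm_of (Srel ^ 1) hzz')

theorem srel_pow_iff_parity_eq {n : ℕ} (hn : 5 ≤ n) {x z : Htriads} :
    (Srel ^ n) x z ↔ parity (pcSum z) = parity (pcSum x) + n := by
  refine ⟨parity_eq_of_srel_pow, fun h ↦ ?_⟩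
  induction n, hn using Nat.le_induction generalizing z with
  | base => exact srel_pow_five_of_parity_eq h
  | succ n _ ih =>
    obtain ⟨y, hzy, -⟩ := exists_srel_pcSum_eq_add_one z
    have hy : parity (pcSum y) = parity (pcSum x) + n := by
      rw [← add_left_inj 1, ← parity_eq_of_srel (symm_of Srel hzy), h, Nat.cast_succ, add_assoc]
    exact MRel.pow_add_apply (ih hy) (MRel.pow_one_apply (symm_of Srel hzy))

/-- `S⁷ = S⁵` in the monoid of relations on `Htriads`. -/
theorem stmt11 : Srel ^ 7 = Srel ^ 5 := by
  have seven_eq_five : ((7 : ℕ) : ZMod 2) = (5 : ℕ) := rfl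
  ext x z
  rw [srel_pow_iff_parity_eq (by norm_num), srel_pow_iff_parity_eq le_rfl, seven_eq_five]
end
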